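/- Let (V,d) be a nonempty finite metric space, G a simple graph on V, and let V be partitioned into two disjoint sets B (blue) and P (purple) with B nonempty. Suppose there exists at least one B-saturating matching, i.e., an injective map M : B → P such that b is G-adjacent to M(b) for every b in B. Let w0 be the minimum over all B-saturating matchings M of max over b in B of d(b, M(b)), and let R be the minimum radius over all k-clusterings of (V,d). Then there exist a k-clustering (σ, c) of (V,d) and a B-saturating matching M such that σ(M(b)) = σ(b) for every b in B, and the radius of (σ, c) is at most w0 + R. -/

import Mathlib

/-- `M` is a `B`-saturating matching: an injective map from `B` into `P` matching each blue
vertex to a `G`-adjacent purple vertex. -/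
def IsSatMatching {V : Type*} (G : SimpleGraph V) (B P : Set V) (M : B → V) : Prop :=
  (∀ b : B, M b ∈ P) ∧ Function.Injective M ∧ ∀ b : B, G.Adj (b : V) (M b)

section Clustering

variable {V ι : Type*} [PseudoMetricSpace V]

/-- The `k`-center radius of the clustering with assignment `σ` and centers `c`. The clusters are
indexed by an arbitrary type `ι`; a `k`-clustering is the case `ι = Fin k`. -/
noncomputable def clusteringRadius (σ : V → ι) (c : ι → V) : ℝ :=
  ⨆ v : V, dist v (c (σ v))

variable (V ι) in
/-- The unconstrained `k`-center optimum: the least radius of a clustering of `V` into clusters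
indexed by `ι`. -/
noncomputable def optimalRadius : ℝ :=
  sInf {r : ℝ | ∃ (σ : V → ι) (c : ι → V), r = clusteringRadius σ c}

lemma dist_le_clusteringRadius [Finite V] (σ : V → ι) (c : ι → V) (v : V) :
    dist v (c (σ v)) ≤ clusteringRadius σ c :=
  le_ciSup (f := fun v ↦ dist v (c (σ v))) (Set.finite_range _).bddAbove v

lemma exists_clusteringRadius_eq_optimalRadius [Finite V] [Nonempty V] [Nonempty ι] :
    ∃ (σ : V → ι) (c : ι → V), clusteringRadius σ c = optimalRadius V ι := by
  let radii : Set ℝ := {r | ∃ (σ : V → ι) (c : ι → V), r = clusteringRadius σ c}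
  have radii_nonempty : radii.Nonempty :=
    ⟨_, Function.const V (Classical.arbitrary ι), Function.const ι (Classical.arbitrary V), rfl⟩
  -- The radius depends only on the composite `c ∘ σ : V → V`, so `ι` need not be finite.
  have radii_finite : radii.Finite := by
    refine (Set.finite_range fun f : V → V ↦ ⨆ v, dist v (f v)).subset ?_
    rintro _ ⟨σ, c, rfl⟩
    exact ⟨c ∘ σ, rfl⟩
  obtain ⟨σ, c, h⟩ := radii_nonempty.csInf_mem radii_finite
  exact ⟨σ, c, h.symm⟩

lemma clusteringRadius_comp_le [Finite V] [Nonempty V] (σ : V → ι) (c : ι → V) {f : V → V} {w : ℝ}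
    (hf : ∀ v, dist v (f v) ≤ w) :
    clusteringRadius (σ ∘ f) c ≤ w + clusteringRadius σ c :=
  ciSup_le fun v ↦ calc
    dist v (c (σ (f v))) ≤ dist v (f v) + dist (f v) (c (σ (f v))) := dist_triangle _ _ _
    _ ≤ w + clusteringRadius σ c := add_le_add (hf v) (dist_le_clusteringRadius σ c (f v))

end Clustering

section Matching

variable {V : Type*} {G : SimpleGraph V} {B P : Set V} {M : B → V}

/-- The bottleneck value `w0`: the least possible length of the longest edge of a `B`-saturating
matching. -/
noncomputable def bottleneckValue [PseudoMetricSpace V] (G : SimpleGraph V) (B P : Set V) : ℝ :=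
  sInf {x : ℝ | ∃ M : B → V, IsSatMatching G B P M ∧ x = ⨆ b : B, dist (b : V) (M b)}

lemma exists_isSatMatching_dist_le_bottleneckValue [PseudoMetricSpace V] [Finite V]
    (hexists : ∃ M : B → V, IsSatMatching G B P M) :
    ∃ M : B → V, IsSatMatching G B P M ∧ ∀ b : B, dist (b : V) (M b) ≤ bottleneckValue G B P := by
  let longestEdge (M : B → V) : ℝ := ⨆ b : B, dist (b : V) (M b)
  let values : Set ℝ := {x | ∃ M, IsSatMatching G B P M ∧ x = longestEdge M}
  have values_nonempty : values.Nonempty := hexists.imp' longestEdge fun M hM ↦ ⟨M, hM, rfl⟩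
  have values_finite : values.Finite := by
    refine (Set.finite_range longestEdge).subset ?_
    rintro _ ⟨M, -, rfl⟩
    exact ⟨M, rfl⟩
  obtain ⟨M, hM, hMw⟩ := values_nonempty.csInf_mem values_finite
  refine ⟨M, hM, fun b ↦ ?_⟩
  calc
    dist (b : V) (M b) ≤ longestEdge M :=
      le_ciSup (f := fun b : B ↦ dist (b : V) (M b)) (Set.finite_range _).bddAbove b
    _ = bottleneckValue G B P := hMw.symm

lemma IsSatMatching.notMem (hM : IsSatMatching G B P M) (hdisj : Disjoint B P) (b : B) :
    M b ∉ B :=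
  hdisj.notMem_of_mem_right (hM.1 b)

/-- The map sending each vertex of `B` to its partner under `M` and fixing all other vertices.
Precomposing a cluster assignment with it moves every blue vertex into its partner's cluster. -/
noncomputable def partnerOrSelf (M : B → V) : V → V :=
  Function.extend Subtype.val M id

lemma partnerOrSelf_coe (M : B → V) (b : B) : partnerOrSelf M b = M b :=
  Subtype.val_injective.extend_apply M id b

lemma partnerOrSelf_of_notMem (M : B → V) {v : V} (hv : v ∉ B) : partnerOrSelf M v = v :=
  Function.extend_apply' M id v fun ⟨b, hb⟩ ↦ hv (hb ▸ b.2)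

lemma dist_partnerOrSelf_le [PseudoMetricSpace V] {w : ℝ} (hw : 0 ≤ w)
    (hM : ∀ b : B, dist (b : V) (M b) ≤ w) (v : V) : dist v (partnerOrSelf M v) ≤ w := by
  by_cases hv : v ∈ B
  · exact (partnerOrSelf_coe M ⟨v, hv⟩).symm ▸ hM ⟨v, hv⟩
  · rwa [partnerOrSelf_of_notMem M hv, dist_self]

end Matching

theorem fairness_clustering_exists_general {V ι : Type*} [PseudoMetricSpace V] [Finite V]
    [Nonempty ι] {G : SimpleGraph V} {B P : Set V} (hdisj : Disjoint B P) (hB : B.Nonempty)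
    (hexists : ∃ M : B → V, IsSatMatching G B P M) :
    ∃ (σ : V → ι) (c : ι → V) (M : B → V), IsSatMatching G B P M ∧
      (∀ b : B, σ (M b) = σ (b : V)) ∧
      clusteringRadius σ c ≤ bottleneckValue G B P + optimalRadius V ι := by
  obtain ⟨b₀, hb₀⟩ := hB
  have : Nonempty V := ⟨b₀⟩
  obtain ⟨M, hM, hMw⟩ := exists_isSatMatching_dist_le_bottleneckValue hexists
  obtain ⟨σ, c, hσc⟩ := exists_clusteringRadius_eq_optimalRadius (V := V) (ι := ι)
  have hw : 0 ≤ bottleneckValue G B P := dist_nonneg.trans (hMw ⟨b₀, hb₀⟩)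
  refine ⟨σ ∘ partnerOrSelf M, c, M, hM, fun b ↦ ?_, ?_⟩
  · simp only [Function.comp_apply, partnerOrSelf_coe,
      partnerOrSelf_of_notMem M (hM.notMem hdisj b)]
  · rw [← hσc]
    exact clusteringRadius_comp_le σ c (dist_partnerOrSelf_le hw hMw)

/-- There exist a `k`-clustering and a `B`-saturating matching whose matched pairs are all
co-clustered, with radius at most `w0 + R`, where `w0` is the bottleneck `B`-saturating
matching value and `R` the optimal `k`-center radius. -/
theorem fairness_clustering_exists {V : Type*} [MetricSpace V] [Fintype V] [Nonempty V]
    (G : SimpleGraph V) (B P : Set V) (hdisj : Disjoint B P) (hpart : B ∪ P = Set.univ)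
    (hB : B.Nonempty) (k : ℕ) (hk : 1 ≤ k)
    (hexists : ∃ M : B → V, IsSatMatching G B P M) :
    ∃ (σ : V → Fin k) (c : Fin k → V) (M : B → V), IsSatMatching G B P M ∧
      (∀ b : B, σ (M b) = σ (b : V)) ∧
      (⨆ v : V, dist v (c (σ v))) ≤
        sInf {x : ℝ | ∃ M' : B → V, IsSatMatching G B P M' ∧
            x = ⨆ b : B, dist (b : V) (M' b)} +
          sInf {r : ℝ | ∃ (σ' : V → Fin k) (c' : Fin k → V),
            r = ⨆ v : V, dist v (c' (σ' v))} := by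
  have : Nonempty (Fin k) := Fin.pos_iff_nonempty.mp hk
  exact fairness_clustering_exists_general hdisj hB hexists
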